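/- (Magic of potions, geometric form.) Let f = {a_i}_{i∈I} be a relevant family of homogeneous elements, closed under homogeneous divisors (f = f̲), of an M-graded commutative ring A, and let g = {b_j}_{j∈J} be a finite family of homogeneous elements of A. Let χ : A_{(f)} → A_{(f∪g)} be the canonical ring homomorphism between potions. Then the induced morphism of affine schemes Spec(A_{(f∪g)}) → Spec(A_{(f)}) (i.e., Spec.map applied to χ) is an open immersion. -/

import Mathlib

/-!
Statement 8 (Magic of potions, geometric form): for `f` a relevant family of
homogeneous elements, closed under homogeneous divisors, and `g` a finite family of
homogeneous elements, the morphism of affine schemes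
`Spec (A_{(f∪g)}) → Spec (A_{(f)})` induced by the canonical ring homomorphism
`χ : A_{(f)} → A_{(f∪g)}` is an open immersion.
-/

open AlgebraicGeometry

/-- The set of degrees of homogeneous divisors of members of the family `f`. -/
def divisorDegrees {M A I : Type*} [AddCommGroup M] [CommRing A]
    (𝒜 : M → Submodule ℤ A) (f : I → A) : Set M :=
  {m | ∃ x : A, x ≠ 0 ∧ x ∈ 𝒜 m ∧ ∃ i, x ∣ f i}

/-- A family `f` of homogeneous elements of an `M`-graded ring is *relevant* if every
`x ∈ M` has a positive multiple lying in the subgroup of `M` generated by the degrees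
of the homogeneous divisors of members of `f`. -/
def IsRelevant {M A I : Type*} [AddCommGroup M] [CommRing A]
    (𝒜 : M → Submodule ℤ A) (f : I → A) : Prop :=
  ∀ x : M, ∃ n : ℕ, 0 < n ∧ n • x ∈ AddSubgroup.closure (divisorDegrees 𝒜 f)

/-- The canonical ring homomorphism between localizations of the same ring at two
nested submonoids `S ≤ T`. -/
noncomputable def locMap {A : Type*} [CommRing A] {S T : Submonoid A} (h : S ≤ T) :
    Localization S →+* Localization T :=
  IsLocalization.map (Localization T) (RingHom.id A)
    (show S ≤ Submonoid.comap (RingHom.id A) T from h)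

/-
A fraction `w = W / D` of degree zero over `S` becomes invertible in the potion of `T ⊇ S` as soon
as `W` divides a member of `T`; if conversely every member of `T` divides some `W ^ N * s` with
`s ∈ S`, then the potion of `T` is the localization of the potion of `S` away from `w`. Relevance
provides such a fraction for each `b_j`: a positive multiple of `deg b_j` is a difference of degrees
of homogeneous divisors of members of `S`, so `b_j ^ n * v` has the degree of a member of `S` for
some `v` dividing a member of `S`. The product of these finitely many fractions is `w`.
-/

open HomogeneousLocalization SetLike

theorem mem_saturation_of_dvd {R : Type*} [CommMonoid R] {S : Submonoid R} {x y : R}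
    (hxy : x ∣ y) (hy : y ∈ S.saturation) : x ∈ S.saturation := by
  obtain ⟨s, hs, hys⟩ := Submonoid.mem_saturation_iff_exists_dvd.1 hy
  exact Submonoid.mem_saturation_iff_exists_dvd.2 ⟨s, hs, hxy.trans hys⟩

theorem exists_dvd_mul_pow_of_mem_saturation {R : Type*} [CommMonoid R] {S : Submonoid R}
    {x t : R} (ht : t ∈ (S ⊔ Submonoid.powers x).saturation) :
    ∃ s ∈ S, ∃ n : ℕ, t ∣ s * x ^ n := by
  obtain ⟨_, hmem, hdvd⟩ := Submonoid.mem_saturation_iff_exists_dvd.1 ht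
  obtain ⟨s, hs, _, ⟨n, rfl⟩, rfl⟩ := Submonoid.mem_sup.1 hmem
  exact ⟨s, hs, n, hdvd⟩

theorem saturation_sup_powers_prod {R J : Type*} [CommMonoid R] [Fintype J] (S : Submonoid R)
    (g v : J → R) {n : J → ℕ} (hn : ∀ j, n j ≠ 0) (hv : ∀ j, v j ∈ S.saturation) :
    (S ⊔ Submonoid.powers (∏ j, g j ^ n j * v j)).saturation =
      (S ⊔ Submonoid.closure (Set.range g)).saturation := by
  apply le_antisymm <;>
    refine Submonoid.saturation_le_of_le
      (sup_le (le_sup_left.trans Submonoid.le_toSubmonoid_saturation) ?_)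
  · rw [Submonoid.powers_le]
    refine prod_mem fun j _ => mul_mem (pow_mem ?_ _) ?_
    · exact Submonoid.le_toSubmonoid_saturation
        (le_sup_right (a := S) (Submonoid.subset_closure ⟨j, rfl⟩))
    · exact (Submonoid.gc_saturation R).monotone_l le_sup_left (hv j)
  · rw [Submonoid.closure_le]
    rintro _ ⟨j, rfl⟩
    have hdvd : g j ∣ ∏ j, g j ^ n j * v j :=
      ((dvd_pow_self _ (hn j)).mul_right _).trans (Finset.dvd_prod_of_mem _ (Finset.mem_univ j))
    exact mem_saturation_of_dvd hdvd (Submonoid.le_toSubmonoid_saturation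
      (le_sup_right (a := S) (Submonoid.mem_powers _)))

theorem exists_sub_eq_of_mem_closure {G : Type*} [AddCommGroup G] (P : AddSubmonoid G) {x : G}
    (hx : x ∈ AddSubgroup.closure (P : Set G)) : ∃ a ∈ P, ∃ b ∈ P, a - b = x := by
  induction hx using AddSubgroup.closure_induction with
  | mem x hx => exact ⟨x, hx, 0, zero_mem P, sub_zero x⟩
  | zero => exact ⟨0, zero_mem P, 0, zero_mem P, sub_zero 0⟩
  | add _ _ _ _ hx hy =>
    obtain ⟨a, ha, b, hb, rfl⟩ := hx
    obtain ⟨c, hc, d, hd, rfl⟩ := hy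
    exact ⟨a + c, add_mem ha hc, b + d, add_mem hb hd, add_sub_add_comm a c b d⟩
  | neg _ _ hx =>
    obtain ⟨a, ha, b, hb, rfl⟩ := hx
    exact ⟨b, hb, a, ha, (neg_sub a b).symm⟩

section HomogeneousDivisors

/-- The degrees of the homogeneous divisors of members of `S`. For `S` generated by a family they
contain the degrees generating the subgroup in `IsRelevant`. If `0 ∈ S`, every degree occurs, since
`0` is homogeneous of every degree. -/
def saturationDegrees {ι A σ : Type*} [AddMonoid ι] [Monoid A] [SetLike σ A]
    (𝒜 : ι → σ) [GradedMonoid 𝒜] (S : Submonoid A) : AddSubmonoid ι where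
  carrier := {i | ∃ x ∈ S.saturation, x ∈ 𝒜 i}
  zero_mem' := ⟨1, one_mem _, one_mem_graded 𝒜⟩
  add_mem' := by
    rintro i j ⟨x, hxS, hx⟩ ⟨y, hyS, hy⟩
    exact ⟨x * y, mul_mem hxS hyS, mul_mem_graded hx hy⟩

theorem exists_homogeneous_mul_eq_of_dvd {ι A σ : Type*} [AddCommGroup ι] [DecidableEq ι]
    [Semiring A] [SetLike σ A] [AddSubmonoidClass σ A] (𝒜 : ι → σ) [GradedRing 𝒜]
    {i j : ι} {x s : A} (hx : x ∈ 𝒜 i) (hs : s ∈ 𝒜 j) (hxs : x ∣ s) :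
    ∃ y ∈ 𝒜 (j - i), x * y = s := by
  obtain ⟨z, rfl⟩ := hxs
  refine ⟨DirectSum.decompose 𝒜 z (j - i), SetLike.coe_mem _, ?_⟩
  rw [← DirectSum.coe_decompose_mul_add_of_left_mem 𝒜 hx, add_sub_cancel,
    DirectSum.decompose_of_mem_same 𝒜 hs]

theorem coe_num_prod {ι A σ J : Type*} [AddCommMonoid ι] [DecidableEq ι] [CommRing A]
    [SetLike σ A] [AddSubmonoidClass σ A] {𝒜 : ι → σ} [GradedRing 𝒜] {S : Submonoid A}
    (t : Finset J) (w : J → NumDenSameDeg 𝒜 S) :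
    ((∏ j ∈ t, w j).num : A) = ∏ j ∈ t, ((w j).num : A) := by
  classical
  induction t using Finset.induction_on with
  | empty => rfl
  | insert j t hj ih =>
    rw [Finset.prod_insert hj, Finset.prod_insert hj, NumDenSameDeg.num_mul, ih]

variable {ι A σ : Type*} [AddCommGroup ι] [DecidableEq ι] [CommRing A] [SetLike σ A]
  [AddSubmonoidClass σ A] {𝒜 : ι → σ} [GradedRing 𝒜] {S : Submonoid A}

theorem exists_homogeneous_mul_mem (hS : S ≤ homogeneousSubmonoid 𝒜) {i : ι} {x : A}
    (hx : x ∈ 𝒜 i) (hxS : x ∈ S.saturation) : ∃ j, ∃ y ∈ 𝒜 j, x * y ∈ S := by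
  obtain ⟨s, hs, hxs⟩ := Submonoid.mem_saturation_iff_exists_dvd.1 hxS
  obtain ⟨k, hk⟩ := hS hs
  obtain ⟨y, hy, rfl⟩ := exists_homogeneous_mul_eq_of_dvd 𝒜 hx hk hxs
  exact ⟨k - i, y, hy, hs⟩

theorem exists_num_eq_pow_mul (hS : S ≤ homogeneousSubmonoid 𝒜) {m : ι} {n : ℕ} {b : A}
    (hb : b ∈ 𝒜 m) (hn : n • m ∈ AddSubgroup.closure (saturationDegrees 𝒜 S : Set ι)) :
    ∃ w : NumDenSameDeg 𝒜 S, ∃ v ∈ S.saturation, (w.num : A) = b ^ n * v := by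
  obtain ⟨i, ⟨x, hxS, hx⟩, j, ⟨y, hyS, hy⟩, hij⟩ := exists_sub_eq_of_mem_closure _ hn
  obtain ⟨k, z, hz, hxz⟩ := exists_homogeneous_mul_mem hS hx hxS
  have hzS : z ∈ S.saturation :=
    Submonoid.mem_saturation_iff_exists_dvd.2 ⟨x * z, hxz, dvd_mul_left z x⟩
  have hdeg : n • m + (j + k) = i + k := by rw [← hij]; abel
  have hnum : b ^ n * (y * z) ∈ 𝒜 (i + k) :=
    hdeg ▸ mul_mem_graded (pow_mem_graded n hb) (mul_mem_graded hy hz)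
  exact ⟨⟨i + k, ⟨_, hnum⟩, ⟨x * z, mul_mem_graded hx hz⟩, hxz⟩, y * z, mul_mem hyS hzS, rfl⟩

theorem exists_saturation_sup_powers_num_eq {J : Type*} [Finite J]
    (hS : S ≤ homogeneousSubmonoid 𝒜) {g : J → A}
    (hg : ∀ j, ∃ m, g j ∈ 𝒜 m ∧ ∃ n : ℕ, 0 < n ∧
      n • m ∈ AddSubgroup.closure (saturationDegrees 𝒜 S : Set ι)) :
    ∃ w : NumDenSameDeg 𝒜 S, (S ⊔ Submonoid.powers (w.num : A)).saturation =
      (S ⊔ Submonoid.closure (Set.range g)).saturation := by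
  cases nonempty_fintype J
  choose m hm n hn hnm using hg
  choose w v hv hw using fun j => exists_num_eq_pow_mul hS (hm j) (hnm j)
  refine ⟨∏ j, w j, ?_⟩
  simp only [coe_num_prod, hw]
  exact saturation_sup_powers_prod S g v (fun j => (hn j).ne') hv

end HomogeneousDivisors

section Potion

variable {ι A σ : Type*} [CommRing A] [SetLike σ A] {𝒜 : ι → σ} {S T : Submonoid A}

theorem mk_eq_mk_iff_exists {x y : NumDenSameDeg 𝒜 S} :
    mk x = mk y ↔ ∃ s ∈ S, s * (y.den * x.num : A) = s * (x.den * y.num) := by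
  rw [ext_iff_val, val_mk, val_mk, Localization.mk_eq_mk_iff, Localization.r_iff_exists]
  exact Subtype.exists.trans (by simp only [exists_prop])

variable [AddCommMonoid ι] [DecidableEq ι] [AddSubgroupClass σ A] [GradedRing 𝒜]

theorem mk_eq_zero_iff_exists {x : NumDenSameDeg 𝒜 S} :
    mk x = 0 ↔ ∃ s ∈ S, s * (x.num : A) = 0 := by
  rw [← mk_zero, mk_eq_mk_iff_exists]
  simp only [NumDenSameDeg.num_zero, NumDenSameDeg.den_zero, ZeroMemClass.coe_zero, one_mul,
    mul_zero]

theorem mapId_mk (hST : S ≤ T) (x : NumDenSameDeg 𝒜 S) :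
    mapId 𝒜 hST (mk x) = mk ⟨x.deg, x.num, x.den, hST x.den_mem⟩ :=
  rfl

theorem val_mapId (hST : S ≤ T) (x : HomogeneousLocalization 𝒜 S) :
    (mapId 𝒜 hST x).val = locMap hST x.val := by
  obtain ⟨x, rfl⟩ := mk_surjective x
  rw [mapId_mk, val_mk, val_mk, locMap, Localization.mk_eq_mk', Localization.mk_eq_mk',
    IsLocalization.map_mk']
  rfl

theorem exists_mk_pow_mul_eq_zero (hST : S ≤ T) {w : NumDenSameDeg 𝒜 S}
    (hw : T ≤ (S ⊔ Submonoid.powers (w.num : A)).saturation.toSubmonoid)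
    {x : HomogeneousLocalization 𝒜 S} (hx : mapId 𝒜 hST x = 0) :
    ∃ n : ℕ, mk w ^ n * x = 0 := by
  obtain ⟨x, rfl⟩ := mk_surjective x
  rw [mapId_mk, mk_eq_zero_iff_exists] at hx
  obtain ⟨t, ht, htx⟩ := hx
  obtain ⟨s, hs, n, c, hc⟩ := exists_dvd_mul_pow_of_mem_saturation (hw ht)
  refine ⟨n, ?_⟩
  rw [← mk_pow, ← mk_mul, mk_eq_zero_iff_exists]
  refine ⟨s, hs, ?_⟩
  rw [NumDenSameDeg.num_mul, NumDenSameDeg.num_pow]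
  linear_combination (x.num : A) * hc + c * htx

end Potion

section PotionLocalization

variable {ι A σ : Type*} [AddCommGroup ι] [DecidableEq ι] [CommRing A] [SetLike σ A]
  [AddSubgroupClass σ A] {𝒜 : ι → σ} [GradedRing 𝒜] {S T : Submonoid A}

theorem isUnit_mk_of_num_mem_saturation (hS : S ≤ homogeneousSubmonoid 𝒜)
    {w : NumDenSameDeg 𝒜 S} (hw : (w.num : A) ∈ S.saturation) : IsUnit (mk w) := by
  obtain ⟨j, y, hy, hwy⟩ := exists_homogeneous_mul_mem hS w.num.2 hw
  let w' : NumDenSameDeg 𝒜 S := ⟨w.deg + j, ⟨w.den * y, mul_mem_graded w.den.2 hy⟩,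
    ⟨w.num * y, mul_mem_graded w.num.2 hy⟩, hwy⟩
  refine IsUnit.of_mul_eq_one (mk w') ?_
  rw [← mk_mul, ← mk_one, mk_eq_mk_iff_exists]
  refine ⟨1, one_mem S, ?_⟩
  simp only [w', NumDenSameDeg.num_mul, NumDenSameDeg.den_mul, NumDenSameDeg.num_one,
    NumDenSameDeg.den_one]
  ring

theorem exists_mul_mapId_pow_eq (hST : S ≤ T) (hS : S ≤ homogeneousSubmonoid 𝒜)
    {w : NumDenSameDeg 𝒜 S} (hw : T ≤ (S ⊔ Submonoid.powers (w.num : A)).saturation.toSubmonoid)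
    (z : HomogeneousLocalization 𝒜 T) :
    ∃ (n : ℕ) (x : HomogeneousLocalization 𝒜 S),
      z * mapId 𝒜 hST (mk w) ^ n = mapId 𝒜 hST x := by
  obtain ⟨z, rfl⟩ := mk_surjective z
  obtain ⟨s, hs, n, hdvd⟩ := exists_dvd_mul_pow_of_mem_saturation (hw z.den_mem)
  obtain ⟨k, hk⟩ := hS hs
  obtain ⟨c, hc, hzc⟩ := exists_homogeneous_mul_eq_of_dvd 𝒜 z.den.2
    (mul_mem_graded hk (pow_mem_graded n w.num.2)) hdvd
  have hnum : z.num * c ∈ 𝒜 (k + n • w.deg) :=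
    add_sub_cancel z.deg (k + n • w.deg) ▸ mul_mem_graded z.num.2 hc
  let x : NumDenSameDeg 𝒜 S := ⟨k + n • w.deg, ⟨z.num * c, hnum⟩,
    ⟨s * w.den ^ n, mul_mem_graded hk (pow_mem_graded n w.den.2)⟩,
    mul_mem hs (pow_mem w.den_mem n)⟩
  refine ⟨n, mk x, ?_⟩
  rw [mapId_mk, mapId_mk, ← mk_pow, ← mk_mul, mk_eq_mk_iff_exists]
  refine ⟨1, one_mem T, ?_⟩
  simp only [x, NumDenSameDeg.num_mul, NumDenSameDeg.den_mul, NumDenSameDeg.num_pow,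
    NumDenSameDeg.den_pow]
  linear_combination (-(z.num : A) * w.den ^ n) * hzc

theorem isLocalizationAway_mapId (hST : S ≤ T) (hT : T ≤ homogeneousSubmonoid 𝒜)
    {w : NumDenSameDeg 𝒜 S}
    (hw : (S ⊔ Submonoid.powers (w.num : A)).saturation = T.saturation) :
    letI := (mapId 𝒜 hST).toAlgebra
    IsLocalization.Away (mk w) (HomogeneousLocalization 𝒜 T) := by
  let := (mapId 𝒜 hST).toAlgebra
  have hnum : (w.num : A) ∈ T.saturation :=
    hw ▸ Submonoid.le_toSubmonoid_saturation (le_sup_right (a := S) (Submonoid.mem_powers _))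
  have hle : T ≤ (S ⊔ Submonoid.powers (w.num : A)).saturation.toSubmonoid :=
    hw ▸ Submonoid.le_toSubmonoid_saturation
  refine IsLocalization.Away.mk _ (isUnit_mk_of_num_mem_saturation hT hnum)
    (exists_mul_mapId_pow_eq hST (hST.trans hT) hle) fun x y hxy => ?_
  obtain ⟨n, hn⟩ := exists_mk_pow_mul_eq_zero hST hle
    ((map_sub (mapId 𝒜 hST) x y).trans (sub_eq_zero.2 hxy))
  exact ⟨n, sub_eq_zero.1 ((mul_sub _ x y).symm.trans hn)⟩

end PotionLocalization

theorem divisorDegrees_subset_saturationDegrees {M A I : Type*} [AddCommGroup M]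
    [CommRing A] (𝒜 : M → Submodule ℤ A) [GradedMonoid 𝒜] (f : I → A) :
    divisorDegrees 𝒜 f ⊆ saturationDegrees 𝒜 (Submonoid.closure (Set.range f)) := by
  rintro m ⟨x, -, hx, i, hxi⟩
  exact ⟨x, Submonoid.mem_saturation_iff_exists_dvd.2
    ⟨f i, Submonoid.subset_closure ⟨i, rfl⟩, hxi⟩, hx⟩

theorem closure_range_le_homogeneousSubmonoid {ι A σ J : Type*} [AddMonoid ι] [Monoid A]
    [SetLike σ A] {𝒜 : ι → σ} [GradedMonoid 𝒜] {g : J → A} (hg : ∀ j, ∃ m, g j ∈ 𝒜 m) :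
    Submonoid.closure (Set.range g) ≤ homogeneousSubmonoid 𝒜 :=
  Submonoid.closure_le.2 (Set.range_subset_iff.2 hg)

theorem magic_of_potions_isOpenImmersion_general
    {M I J A : Type*} [AddCommGroup M] [DecidableEq M] [CommRing A]
    [Finite J]
    (𝒜 : M → Submodule ℤ A) [GradedRing 𝒜]
    (f : I → A) (g : J → A)
    (hf : ∀ i, ∃ m, f i ∈ 𝒜 m)
    (hg : ∀ j, ∃ m, g j ∈ 𝒜 m ∧ ∃ n : ℕ, 0 < n ∧
      n • m ∈ AddSubgroup.closure (divisorDegrees 𝒜 f))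
    (χ : HomogeneousLocalization 𝒜 (Submonoid.closure (Set.range f)) →+*
        HomogeneousLocalization 𝒜 (Submonoid.closure (Set.range f ∪ Set.range g)))
    (hχ : ∀ w, (χ w).val =
      locMap (Submonoid.closure_mono Set.subset_union_left) w.val) :
    IsOpenImmersion (Spec.map (CommRingCat.ofHom χ)) := by
  have hST : Submonoid.closure (Set.range f) ≤ Submonoid.closure (Set.range f ∪ Set.range g) :=
    Submonoid.closure_mono Set.subset_union_left
  have hS := closure_range_le_homogeneousSubmonoid hf
  have hT : Submonoid.closure (Set.range f ∪ Set.range g) ≤ homogeneousSubmonoid 𝒜 := by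
    rw [Submonoid.closure_union]
    exact sup_le hS (closure_range_le_homogeneousSubmonoid fun j => (hg j).imp fun _ => And.left)
  obtain rfl : χ = mapId 𝒜 hST :=
    RingHom.ext fun x => val_injective _ ((hχ x).trans (val_mapId hST x).symm)
  obtain ⟨w, hw⟩ := exists_saturation_sup_powers_num_eq hS fun j =>
    (hg j).imp fun _ ⟨hm, n, hn, hnm⟩ => ⟨hm, n, hn,
      AddSubgroup.closure_mono (divisorDegrees_subset_saturationDegrees 𝒜 f) hnm⟩
  rw [← Submonoid.closure_union] at hw
  let := (mapId 𝒜 hST).toAlgebra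
  have := isLocalizationAway_mapId hST hT hw
  exact IsOpenImmersion.of_isLocalization (mk w)

theorem magic_of_potions_isOpenImmersion
    {M I J : Type*} {A : Type} [AddCommGroup M] [DecidableEq M] [CommRing A]
    [Finite J]
    (𝒜 : M → Submodule ℤ A) [GradedRing 𝒜]
    (f : I → A) (g : J → A)
    (hf : ∀ i, f i ≠ 0 ∧ ∃ m, f i ∈ 𝒜 m)
    (hg : ∀ j, g j ≠ 0 ∧ ∃ m, g j ∈ 𝒜 m)
    (hrel : IsRelevant 𝒜 f)
    (hdivclosed : {x : A | x ≠ 0 ∧ (∃ m, x ∈ 𝒜 m) ∧ ∃ i, x ∣ f i} = Set.range f)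
    (χ : HomogeneousLocalization 𝒜 (Submonoid.closure (Set.range f)) →+*
        HomogeneousLocalization 𝒜 (Submonoid.closure (Set.range f ∪ Set.range g)))
    (hχ : ∀ w, (χ w).val =
      locMap (Submonoid.closure_mono Set.subset_union_left) w.val) :
    IsOpenImmersion (Spec.map (CommRingCat.ofHom χ)) :=
  magic_of_potions_isOpenImmersion_general 𝒜 f g (fun i => (hf i).2)
    (fun j => (hg j).2.imp fun m hm => ⟨hm, hrel m⟩) χ hχ
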